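/- Let f : ℝⁿ → ℝⁿ, let Φ : ℝⁿ → ℝⁿ be differentiable and satisfy DΦ(x)·f(x) = f(Φ(x)) for all x (i.e., Φ is a symmetry of ẋ = f(x)), and let A : ℝ → Matrix (Fin n) (Fin n) ℝ be differentiable with A(t) invertible for every t. Then Γ(t,x) := A(t)·Φ(A(t)⁻¹·x) is a symmetry of the gauge transform: for every differentiable z : ℝ → ℝⁿ with z'(t) = f*(t, z(t)) for all t, the curve y(t) := Γ(t, z(t)) also satisfies y'(t) = f*(t, y(t)) for all t. -/

import Mathlib

open Matrix

/-!
A curve `w` solves `ẋ = f(t,x)` exactly when `A w` solves the gauge transformed equation: the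
product rule gives one direction, and also the other, since `A⁻¹` is differentiable and the velocity
of `A w` determines that of `w`. By the chain rule, the symmetry `Φ` carries the solution `A⁻¹ z`
of the original equation to another solution, which is then transformed back.
-/

section Gauge

variable {𝕜 E F : Type*} [NontriviallyNormedField 𝕜]
  [NormedAddCommGroup E] [NormedSpace 𝕜 E] [NormedAddCommGroup F] [NormedSpace 𝕜 F]

/-- The gauge transform `f*(t,y) = A'(t)·A(t)⁻¹·y + A(t)·f(t, A(t)⁻¹·y)` of a time-dependent vector
field `f` by a curve `A` of isomorphisms. The velocity `A'` of `A` is a separate argument, so that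
no junk value of `deriv` enters. -/
def gaugeTransform (A : 𝕜 → E ≃L[𝕜] F) (A' : 𝕜 → E →L[𝕜] F) (f : 𝕜 → E → E) (t : 𝕜) (y : F) : F :=
  A' t ((A t).symm y) + A t (f t ((A t).symm y))

theorem differentiableAt_continuousLinearEquiv_symm [CompleteSpace E] {A : 𝕜 → E ≃L[𝕜] F} {t : 𝕜}
    (hA : DifferentiableAt 𝕜 (fun s => (A s : E →L[𝕜] F)) t) :
    DifferentiableAt 𝕜 (fun s => ((A s).symm : F →L[𝕜] E)) t := by
  have hinv : DifferentiableAt 𝕜 ContinuousLinearMap.inverse (A t : E →L[𝕜] F) :=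
    (contDiffAt_map_inverse (n := 1) (A t)).differentiableAt one_ne_zero
  simpa only [Function.comp_def, ContinuousLinearMap.inverse_equiv] using hinv.comp t hA

theorem hasDerivAt_continuousLinearEquiv_apply_iff [CompleteSpace E] {A : 𝕜 → E ≃L[𝕜] F}
    {A' : E →L[𝕜] F} {w : 𝕜 → E} {w' : E} {t : 𝕜}
    (hA : HasDerivAt (fun s => (A s : E →L[𝕜] F)) A' t) :
    HasDerivAt (fun s => A s (w s)) (A' (w t) + A t w') t ↔ HasDerivAt w w' t := by
  refine ⟨fun hAw => ?_, fun hw => hA.clm_apply hw⟩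
  have hw : HasDerivAt w (deriv w t) t := by
    have hsymm := differentiableAt_continuousLinearEquiv_symm hA.differentiableAt
    simpa using (hsymm.clm_apply hAw.differentiableAt).hasDerivAt
  have hvelocity : A' (w t) + A t (deriv w t) = A' (w t) + A t w' :=
    (hA.clm_apply hw).unique hAw
  rwa [(A t).injective (add_left_cancel hvelocity)] at hw

theorem hasDerivAt_gaugeTransform_iff [CompleteSpace E] {A : 𝕜 → E ≃L[𝕜] F}
    {A' : 𝕜 → E →L[𝕜] F} {f : 𝕜 → E → E} {w : 𝕜 → E} {t : 𝕜}
    (hA : HasDerivAt (fun s => (A s : E →L[𝕜] F)) (A' t) t) :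
    HasDerivAt (fun s => A s (w s)) (gaugeTransform A A' f t (A t (w t))) t ↔
      HasDerivAt w (f t (w t)) t := by
  simpa only [gaugeTransform, ContinuousLinearEquiv.symm_apply_apply] using
    hasDerivAt_continuousLinearEquiv_apply_iff hA

theorem gauge_transform_symmetry_general [CompleteSpace E] {f : 𝕜 → E → E} {Φ : E → E}
    {Φ' : E →L[𝕜] E} {A : 𝕜 → E ≃L[𝕜] F} {A' : 𝕜 → E →L[𝕜] F} {z : 𝕜 → F} {t : 𝕜}
    (hΦ : HasFDerivAt Φ Φ' ((A t).symm (z t)))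
    (hsym : Φ' (f t ((A t).symm (z t))) = f t (Φ ((A t).symm (z t))))
    (hA : HasDerivAt (fun s => (A s : E →L[𝕜] F)) (A' t) t)
    (hz : HasDerivAt z (gaugeTransform A A' f t (z t)) t) :
    HasDerivAt (fun s => A s (Φ ((A s).symm (z s))))
      (gaugeTransform A A' f t (A t (Φ ((A t).symm (z t))))) t := by
  have hw : HasDerivAt (fun s => (A s).symm (z s)) (f t ((A t).symm (z t))) t :=
    (hasDerivAt_gaugeTransform_iff hA).1 <| by
      simpa only [ContinuousLinearEquiv.apply_symm_apply] using hz
  have hΦw : HasDerivAt (fun s => Φ ((A s).symm (z s))) (f t (Φ ((A t).symm (z t)))) t :=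
    hsym ▸ hΦ.comp_hasDerivAt t hw
  exact (hasDerivAt_gaugeTransform_iff hA).2 hΦw

end Gauge

section Matrix

variable {𝕜 m n : Type*} [NontriviallyNormedField 𝕜] [CompleteSpace 𝕜] [Fintype n]

theorem hasDerivAt_mulVecLin [Finite m] {M : 𝕜 → Matrix m n 𝕜} {M' : Matrix m n 𝕜} {t : 𝕜}
    (hM : ∀ i j, HasDerivAt (fun s => M s i j) (M' i j) t) :
    HasDerivAt (fun s => (M s).mulVecLin.toContinuousLinearMap)
      M'.mulVecLin.toContinuousLinearMap t := by
  have := Fintype.ofFinite m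
  let toOperator : (m → n → 𝕜) →L[𝕜] (n → 𝕜) →L[𝕜] (m → 𝕜) :=
    (LinearMap.toContinuousLinearMap.toLinearMap ∘ₗ mulVecBilin 𝕜 𝕜 ∘ₗ
      (ofLinearEquiv 𝕜).toLinearMap).toContinuousLinearMap
  have hM_pi : HasDerivAt (fun s i j => M s i j) (fun i j => M' i j) t :=
    hasDerivAt_pi.2 fun i => hasDerivAt_pi.2 (hM i)
  exact toOperator.hasFDerivAt.comp_hasDerivAt t hM_pi

/-- The continuous automorphism `v ↦ M *ᵥ v` given by an invertible matrix `M`, with inverse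
`v ↦ M⁻¹ *ᵥ v`; it lets the gauge transform by a curve of matrices be read as a
`gaugeTransform`. -/
noncomputable def mulVecContinuousLinearEquiv [DecidableEq n] (M : Matrix n n 𝕜) (hM : IsUnit M) :
    (n → 𝕜) ≃L[𝕜] (n → 𝕜) :=
  have hdet : IsUnit M.det := M.isUnit_iff_isUnit_det.1 hM
  (toLin'OfInv (M.nonsing_inv_mul hdet) (M.mul_nonsing_inv hdet)).toContinuousLinearEquiv

end Matrix

/-- **Symmetries transfer to gauge transforms.**
If the differentiable map `Φ` is a symmetry of `ẋ = f(x)` (i.e. `DΦ(x)·f(x) = f(Φ(x))` for all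
`x`), then `Γ(t,x) := A(t)·Φ(A(t)⁻¹·x)` is a symmetry of the gauge transform `f*` of `f` by
`A(t)`: whenever `z` solves `ż = f*(t,z)`, so does `y(t) := Γ(t, z(t))`. -/
theorem gauge_transform_symmetry {n : ℕ}
    (f : (Fin n → ℝ) → (Fin n → ℝ))
    (Φ : (Fin n → ℝ) → (Fin n → ℝ))
    (Φ' : (Fin n → ℝ) → ((Fin n → ℝ) →L[ℝ] (Fin n → ℝ)))
    (hΦ : ∀ x, HasFDerivAt Φ (Φ' x) x)
    (hsym : ∀ x, Φ' x (f x) = f (Φ x))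
    (A A' : ℝ → Matrix (Fin n) (Fin n) ℝ)
    (hA : ∀ t, ∀ i j, HasDerivAt (fun s => A s i j) (A' t i j) t)
    (hAinv : ∀ t, IsUnit (A t))
    (z : ℝ → Fin n → ℝ)
    (hz : ∀ t, HasDerivAt z
      ((A' t).mulVec ((A t)⁻¹.mulVec (z t)) +
        (A t).mulVec (f ((A t)⁻¹.mulVec (z t)))) t) :
    ∀ t, HasDerivAt (fun s => (A s).mulVec (Φ ((A s)⁻¹.mulVec (z s))))
      ((A' t).mulVec ((A t)⁻¹.mulVec ((A t).mulVec (Φ ((A t)⁻¹.mulVec (z t))))) +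
        (A t).mulVec (f ((A t)⁻¹.mulVec ((A t).mulVec (Φ ((A t)⁻¹.mulVec (z t))))))) t :=
  fun t => gauge_transform_symmetry_general (f := fun _ => f)
    (A := fun s => mulVecContinuousLinearEquiv (A s) (hAinv s))
    (A' := fun s => (A' s).mulVecLin.toContinuousLinearMap)
    (hΦ _) (hsym _) (hasDerivAt_mulVecLin (hA t)) (hz t)
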